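/- Scaling of the current density under the pseudo-conformal transformation: Let u_c : (0,∞) × ℝ³ → ℂ and B : (0,∞) × ℝ³ → ℝ³ be of class C¹, and for t > 0 define u(t,x) = (it)^{−3/2} e^{i|x|²/(2t)} · conj(u_c(1/t, x/t)) and A(t,x) = −t^{−1} B(1/t, x/t). Then for all t > 0 and x ∈ ℝ³, with y = x/t: Im(ū ∇_{A(t,·)} u)(t,x) = t^{−3} ( y |u_c(1/t, y)|² − t^{−1} Im( conj(u_c) ∇_{B(1/t,·)} u_c )(1/t, y) ), as an identity of ℝ³-valued functions. -/

import Mathlib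

/-!
The prefactor `g(t,x) = (it)^{−3/2} e^{i|x|²/(2t)}` satisfies `|g|² = t⁻³` and `∂ₖ g = i (xₖ/t) g`.
With `v = u_c(1/t, ·)`, `b = B(1/t, ·)` and `y = x/t`, the product and chain rules therefore give
`∂ₖ u = g (i yₖ conj v(y) + t⁻¹ conj (∂ₖ v)(y))` (`pdC_phase_mul_conj`). Since `A = −t⁻¹ b(y)`,
the magnetic term `−i Aₖ u = i t⁻¹ bₖ g conj v` combines with the second summand to
`t⁻¹ g conj (∂ₖ v − i bₖ v)`, so that
`ū (∇_A u)ₖ = t⁻³ (i yₖ |v|² + t⁻¹ conj (conj v (∇_b v)ₖ))`.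
Conjugation reverses the sign of the imaginary part, which is the claim.
-/

noncomputable section
open MeasureTheory Real
open scoped RealInnerProductSpace

/-- Physical space `ℝ³` with the Euclidean norm. -/
abbrev R3 : Type := EuclideanSpace ℝ (Fin 3)

/-- Spatial partial derivative `∂ₖ` of a complex-valued function on `ℝ³`. -/
def pdC (k : Fin 3) (f : R3 → ℂ) (x : R3) : ℂ := fderiv ℝ f x (EuclideanSpace.single k 1)

/-- Spatial partial derivative `∂ₖ` of a real-valued function on `ℝ³`. -/
def pdR (k : Fin 3) (f : R3 → ℝ) (x : R3) : ℝ := fderiv ℝ f x (EuclideanSpace.single k 1)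

/-- Laplacian of a complex-valued function on `ℝ³`. -/
def lapC (f : R3 → ℂ) (x : R3) : ℂ := ∑ k : Fin 3, pdC k (pdC k f) x

/-- Laplacian of a real-valued function on `ℝ³`. -/
def lapR (f : R3 → ℝ) (x : R3) : ℝ := ∑ k : Fin 3, pdR k (pdR k f) x

/-- Divergence `∇·A` of a vector field on `ℝ³`. -/
def divg (A : R3 → R3) (x : R3) : ℝ := ∑ k : Fin 3, pdR k (fun y => A y k) x

/-- Component `k` of the covariant gradient `∇_A u = ∇u − iAu`. -/
def covGrad (A : R3 → R3) (u : R3 → ℂ) (k : Fin 3) (x : R3) : ℂ :=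
  pdC k u x - Complex.I * (A x k : ℂ) * u x

/-- Covariant Laplacian `Δ_A u = Δu − 2iA·∇u − i(∇·A)u − |A|²u`. -/
def covLap (A : R3 → R3) (u : R3 → ℂ) (x : R3) : ℂ :=
  lapC u x - 2 * Complex.I * (∑ k : Fin 3, (A x k : ℂ) * pdC k u x)
    - Complex.I * (divg A x : ℂ) * u x - ((∑ k : Fin 3, (A x k)^2 : ℝ) : ℂ) * u x

/-- Time derivative `∂_t` of a time-dependent complex-valued function. -/
def dtC (f : ℝ → R3 → ℂ) (t : ℝ) (x : R3) : ℂ := deriv (fun s => f s x) t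

/-- Time derivative `∂_t` of a time-dependent real-valued function. -/
def dtR (f : ℝ → R3 → ℝ) (t : ℝ) (x : R3) : ℝ := deriv (fun s => f s x) t

/-- `(it)^{−3/2} = t^{−3/2} e^{−3πi/4}` (principal branch, for `t > 0`). -/
def itPow (t : ℝ) : ℂ :=
  ((t ^ (-(3:ℝ)/2) : ℝ) : ℂ) * Complex.exp (-(3 * (π:ℂ) * Complex.I) / 4)

/-- Since `|e^{iθ}| = 1` for real `θ`, only the modulus `t^{−3/2}` of the prefactor survives. -/
lemma conj_mul_self_prefactor {t : ℝ} (ht : 0 < t) (r : ℝ) :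
    (starRingEnd ℂ) (itPow t * Complex.exp (Complex.I * (r : ℝ) / (2 * t))) *
      (itPow t * Complex.exp (Complex.I * (r : ℝ) / (2 * t))) = (((t ^ 3)⁻¹ : ℝ) : ℂ) := by
  have h1 : ‖Complex.exp (Complex.I * (r : ℝ) / (2 * t))‖ = 1 := by
    have : Complex.I * (r : ℝ) / (2 * t) = ((r / (2 * t) : ℝ) : ℂ) * Complex.I := by
      push_cast; ring
    rw [this, Complex.norm_exp_ofReal_mul_I]
  have h2 : ‖Complex.exp (-(3 * (π : ℂ) * Complex.I) / 4)‖ = 1 := by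
    have : -(3 * (π : ℂ) * Complex.I) / 4 = ((-(3 * π) / 4 : ℝ) : ℂ) * Complex.I := by
      push_cast; ring
    rw [this, Complex.norm_exp_ofReal_mul_I]
  have h3 : (t ^ (-(3 : ℝ) / 2)) ^ 2 = (t ^ 3)⁻¹ := by
    rw [← Real.rpow_natCast, ← Real.rpow_mul ht.le, ← Real.rpow_natCast t 3,
      ← Real.rpow_neg ht.le]
    norm_num
  rw [Complex.conj_mul', norm_mul, h1, itPow, norm_mul, h2, Complex.norm_real,
    Real.norm_of_nonneg (Real.rpow_nonneg ht.le _), mul_one, mul_one, ← h3]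
  push_cast
  rfl

/-- The product and chain rules for the pseudo-conformal transform of `v` at a fixed time. -/
lemma pdC_phase_mul_conj (c : ℂ) (t : ℝ) (v : R3 → ℂ) (x : R3)
    (hv : DifferentiableAt ℝ v (t⁻¹ • x)) (k : Fin 3) :
    pdC k (fun z => c * Complex.exp (Complex.I * (‖z‖ ^ 2 : ℝ) / (2 * t)) *
        (starRingEnd ℂ) (v (t⁻¹ • z))) x =
      c * Complex.exp (Complex.I * (‖x‖ ^ 2 : ℝ) / (2 * t)) *
        (Complex.I * ((t⁻¹ • x) k : ℝ) * (starRingEnd ℂ) (v (t⁻¹ • x))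
          + (t⁻¹ : ℝ) * (starRingEnd ℂ) (pdC k v (t⁻¹ • x))) := by
  have hn : HasFDerivAt (fun z : R3 => ‖z‖ ^ 2) (2 • innerSL ℝ x) x :=
    (hasStrictFDerivAt_norm_sq x).hasFDerivAt
  have hphase := (((Complex.ofRealCLM.hasFDerivAt.comp x hn).const_mul
    (Complex.I / (2 * t))).cexp).const_mul c
  have hlin : HasFDerivAt (fun z : R3 => t⁻¹ • z) (t⁻¹ • ContinuousLinearMap.id ℝ R3) x :=
    (hasFDerivAt_id x).const_smul t⁻¹
  have hconj := Complex.conjCLE.hasFDerivAt.comp x (hv.hasFDerivAt.comp x hlin)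
  have h := hphase.mul hconj
  have hfun : (fun z : R3 => c * Complex.exp (Complex.I * (‖z‖ ^ 2 : ℝ) / (2 * t)) *
        (starRingEnd ℂ) (v (t⁻¹ • z))) =
      (fun z : R3 => c * Complex.exp (Complex.I / (2 * t) *
        (Complex.ofRealCLM ∘ fun z : R3 => ‖z‖ ^ 2) z)) *
      (Complex.conjCLE ∘ (v ∘ fun z : R3 => t⁻¹ • z)) := by
    funext z
    simp only [Pi.mul_apply, Function.comp_apply, Complex.ofRealCLM_apply,
      Complex.conjCLE_apply]
    congr 3
    ring
  have hinner : inner ℝ x (EuclideanSpace.single k (1 : ℝ)) = x k := by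
    simp [EuclideanSpace.inner_single_right]
  have he : Complex.I / (2 * t) * ((‖x‖ ^ 2 : ℝ) : ℂ) =
      Complex.I * (‖x‖ ^ 2 : ℝ) / (2 * t) := by ring
  rw [pdC, hfun, h.fderiv]
  simp [hinner, pdC]
  simp at he
  rw [he]
  ring

/-- scaling of the current density under the pseudo-conformal transformation.
With `u(t,x) = (it)^{−3/2} e^{i|x|²/(2t)} conj(u_c(1/t, x/t))` and `A(t,x) = −t⁻¹ B(1/t, x/t)`,
one has, componentwise with `y = x/t`,
`Im(ū ∇_A u)(t,x) = t⁻³ (y|u_c(1/t,y)|² − t⁻¹ Im(conj(u_c) ∇_B u_c)(1/t,y))`. -/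
theorem current_pseudoConformal_scaling
    (uc : ℝ → R3 → ℂ) (B : ℝ → R3 → R3)
    (huc : ContDiffOn ℝ 1 (fun p : ℝ × R3 => uc p.1 p.2) (Set.Ioi (0:ℝ) ×ˢ Set.univ))
    (hB : ContDiffOn ℝ 1 (fun p : ℝ × R3 => B p.1 p.2) (Set.Ioi (0:ℝ) ×ˢ Set.univ))
    (u : ℝ → R3 → ℂ) (A : ℝ → R3 → R3)
    (hu : ∀ t x, u t x =
      itPow t * Complex.exp (Complex.I * (‖x‖^2 : ℝ) / (2 * t)) *
        (starRingEnd ℂ) (uc t⁻¹ (t⁻¹ • x)))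
    (hA : ∀ t x, A t x = -t⁻¹ • B t⁻¹ (t⁻¹ • x)) :
    ∀ t : ℝ, 0 < t → ∀ x : R3, ∀ k : Fin 3,
      ((starRingEnd ℂ) (u t x) * covGrad (A t) (u t) k x).im =
        ((t^3)⁻¹ : ℝ) *
          ((t⁻¹ • x) k * ‖uc t⁻¹ (t⁻¹ • x)‖^2
            - t⁻¹ * ((starRingEnd ℂ) (uc t⁻¹ (t⁻¹ • x))
                * covGrad (B t⁻¹) (uc t⁻¹) k (t⁻¹ • x)).im) := by
  intro t ht x k
  have hv : DifferentiableAt ℝ (uc t⁻¹) (t⁻¹ • x) := by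
    have hmem : Set.Ioi (0 : ℝ) ×ˢ (Set.univ : Set R3) ∈ nhds (t⁻¹, t⁻¹ • x) :=
      (isOpen_Ioi.prod isOpen_univ).mem_nhds ⟨inv_pos.mpr ht, Set.mem_univ _⟩
    have hd := (huc.contDiffAt hmem).differentiableAt one_ne_zero
    exact hd.comp (t⁻¹ • x)
      (f := fun z : R3 => ((t⁻¹, z) : ℝ × R3)) (by fun_prop)
  have hut : u t = fun z => itPow t * Complex.exp (Complex.I * (‖z‖ ^ 2 : ℝ) / (2 * t)) *
      (starRingEnd ℂ) (uc t⁻¹ (t⁻¹ • z)) := funext (hu t)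
  have hAk : A t x k = -t⁻¹ * B t⁻¹ (t⁻¹ • x) k := by
    rw [hA]; rfl
  have hg := conj_mul_self_prefactor ht (‖x‖ ^ 2)
  have hpd := pdC_phase_mul_conj (itPow t) t (uc t⁻¹) x hv k
  rw [← hut] at hpd
  have key : (starRingEnd ℂ) (u t x) * covGrad (A t) (u t) k x =
      (((t ^ 3)⁻¹ : ℝ) : ℂ) *
        ((((t⁻¹ • x) k * ‖uc t⁻¹ (t⁻¹ • x)‖ ^ 2 : ℝ) : ℂ) * Complex.I
          + ((t⁻¹ : ℝ) : ℂ) * (starRingEnd ℂ) ((starRingEnd ℂ) (uc t⁻¹ (t⁻¹ • x))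
                * covGrad (B t⁻¹) (uc t⁻¹) k (t⁻¹ • x))) := by
    rw [covGrad, covGrad, hpd, hu, hAk, ← hg]
    have hsq := Complex.mul_conj' (uc t⁻¹ (t⁻¹ • x))
    generalize itPow t * Complex.exp (Complex.I * (‖x‖ ^ 2 : ℝ) / (2 * t)) = g
    rw [Complex.ofReal_mul ((t⁻¹ • x) k), Complex.ofReal_pow, ← hsq]
    simp only [map_mul, map_sub, Complex.conj_conj, Complex.conj_I, Complex.conj_ofReal,
      Complex.ofReal_mul, Complex.ofReal_neg]
    ring
  rw [key, Complex.im_ofReal_mul, Complex.add_im, Complex.im_ofReal_mul, Complex.im_ofReal_mul,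
    Complex.conj_im, Complex.I_im]
  ring
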